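/- Let r be a positive integer and a1, a2, a3, a4, e integers such that gcd(a4,r) = gcd(e,r) and gcd(a1,r) = gcd(a2,r) = gcd(a3,r) = 1. Suppose that ∑_{i=1}^4 {j·ai/r} = {j·e/r} + j/r + 1 for every integer j with 1 ≤ j ≤ r−1. Then: (1) if gcd(e,r) > 1, then a4 ≡ e (mod r) and there exists a permutation (i1,i2,i3) of (1,2,3) such that a_{i1} ≡ 1 (mod r) and a_{i2} + a_{i3} ≡ 0 (mod r); (2) if gcd(e,r) = 1, then, setting a5 := −e and a6 := −1, there exists a permutation (i1,i2,i3,i4,i5,i6) of (1,2,3,4,5,6) such that a_{i1} + a_{i2} ≡ 0 (mod r), a_{i3} + a_{i4} ≡ 0 (mod r), and a_{i5} + a_{i6} ≡ 0 (mod r). -/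

import Mathlib

/-!
Put `((x)) = {x} - 1/2` for non-integral `x` and `((x)) = 0` for integral `x`. The gcd conditions
turn the hypothesis into the homogeneous relation `∑ i, ((j aᵢ / r)) = 0` over the six integers
`a₁, a₂, a₃, a₄, -e, -1`, valid for all `j` (`Hyp.saw_rel`). The claim is then that these integers
cancel in pairs modulo `r`, which is a linear independence statement for sawtooth functions.

Let `χ` be an odd character modulo `r`, induced by the primitive character `P` of conductor `f`.
Summing the relation modulo `f` against `P⁻¹` and using `sum_twist` gives `B * ∑ i, P(aᵢ) = 0`, where
`B = ∑ j, P⁻¹(j) ((j / f))`. This `B` is `-L(0, P⁻¹)`, which is nonzero by the functional equation and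
`L(1, P) ≠ 0` (`sum_saw_ne_zero`). Hence `∑ i, P(aᵢ) = 0`. The formula for `L(0, ·)` rests on the
Hurwitz zeta values `ζ(0, x) - ζ(0, 1) = 1 - x` (`hurwitz_sub_zero`), found by continuing the series
for `ζ(s, x) - ζ(s, 1)` past `Re s = 1` after subtracting a telescoping series.

If `g = gcd(e, r)` is `1`, this says that `χ` sums to zero over the six units. Suppose `g > 1`. If
`g` is not prime to `f`, then `a₄` and `-e` contribute nothing. Otherwise write `a₄ = g b`, `-e = g b'`,
`X = P(b) + P(b')` and `D = P(a₁) + P(a₂) + P(a₃) + P(-1)`. The relation modulo `f` reads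
`D + P(g) X = 0`, while the relation modulo `f g`, via `sum_lift_saw`, reads `D + g X = 0`. As
`|P(g)| ≤ 1 < g`, it follows that `X = 0` and `D = 0` (`Hyp.char_rel`).

By orthogonality of characters the units involved form a multiset stable under negation
(`balanced_of_char`). For `r > 2` no unit is its own negative, so they pair off
(`NegBalanced.exists_pair`); for `r ≤ 2` any two units sum to `0`. When `g > 1`, the congruence
`a₄ ≡ e` is what remains of the relation for `j = 1` once `a₁, a₂, a₃` are known.
-/

/-- The six integers `a₁, a₂, a₃, a₄, a₅ := −e, a₆ := −1`. -/
def sixVec (a : Fin 4 → ℤ) (e : ℤ) : Fin 6 → ℤ := ![a 0, a 1, a 2, a 3, -e, -1]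

/-! ### The Hurwitz zeta function at zero -/

/-- A second-order difference estimate: replacing the increment `f p - f q` by the matching multiple
of `f q - f (q + 1)` costs at most `2 * sup ‖f''‖`. It is the mean value inequality applied to
`f'` and then to `f u - u * f' q`. -/
theorem norm_second_diff_le {f f' f'' : ℝ → ℂ} {p q C : ℝ} (hpq : p ≤ q) (hq : q ≤ p + 1)
    (hf : ∀ u ∈ Set.Icc p (q + 1), HasDerivAt f (f' u) u)
    (hf' : ∀ u ∈ Set.Icc p (q + 1), HasDerivAt f' (f'' u) u)
    (hC : ∀ u ∈ Set.Icc p (q + 1), ‖f'' u‖ ≤ C) :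
    ‖f p - f q - (q - p : ℝ) * (f q - f (q + 1))‖ ≤ 2 * C := by
  have hqm : q ∈ Set.Icc p (q + 1) := ⟨hpq, by linarith⟩
  have hpm : p ∈ Set.Icc p (q + 1) := ⟨le_rfl, by linarith⟩
  have hq1m : q + 1 ∈ Set.Icc p (q + 1) := ⟨by linarith, le_rfl⟩
  have hC0 : 0 ≤ C := (norm_nonneg _).trans (hC q hqm)
  have h1 : ∀ u ∈ Set.Icc p (q + 1), ‖f' u - f' q‖ ≤ C := by
    intro u hu
    have := (convex_Icc p (q + 1)).norm_image_sub_le_of_norm_hasDerivWithin_le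
      (fun x hx => (hf' x hx).hasDerivWithinAt) hC hqm hu
    refine this.trans ?_
    have hu1 : ‖u - q‖ ≤ 1 := by
      rw [Real.norm_eq_abs, abs_le]; constructor <;> linarith [hu.1, hu.2]
    nlinarith
  set k : ℝ → ℂ := fun u => f u - (u : ℂ) * f' q with hk
  have hkd : ∀ u ∈ Set.Icc p (q + 1), HasDerivAt k (f' u - f' q) u := by
    intro u hu
    have h2 : HasDerivAt (fun y : ℝ => (y : ℂ)) 1 u := Complex.ofRealCLM.hasDerivAt
    simpa using (hf u hu).fun_sub (h2.mul_const (f' q))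
  have h3 : ∀ u ∈ Set.Icc p (q + 1), ‖k u - k q‖ ≤ C := by
    intro u hu
    have := (convex_Icc p (q + 1)).norm_image_sub_le_of_norm_hasDerivWithin_le
      (fun x hx => (hkd x hx).hasDerivWithinAt) h1 hqm hu
    refine this.trans ?_
    have hu1 : ‖u - q‖ ≤ 1 := by
      rw [Real.norm_eq_abs, abs_le]; constructor <;> linarith [hu.1, hu.2]
    nlinarith
  have h4 : f p - f q - (q - p : ℝ) * (f q - f (q + 1)) =
      (k p - k q) + (q - p : ℝ) * (k (q + 1) - k q) := by
    simp only [hk]; push_cast; ring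
  rw [h4]
  calc _ ≤ ‖k p - k q‖ + ‖((q - p : ℝ) : ℂ)‖ * ‖k (q + 1) - k q‖ := by
        rw [← norm_mul]; exact norm_add_le _ _
    _ ≤ C + 1 * C := by
        gcongr
        · exact h3 p hpm
        · rw [Complex.norm_real, Real.norm_eq_abs, abs_le]; constructor <;> linarith
        · exact h3 _ hq1m
    _ = 2 * C := by ring

theorem hasDerivAt_ofReal_cpow_of_pos (s : ℂ) {u : ℝ} (hu : 0 < u) :
    HasDerivAt (fun y : ℝ => (y : ℂ) ^ s) (s * (u : ℂ) ^ (s - 1)) u := by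
  have h := (hasDerivAt_id (u : ℂ)).cpow_const (c := s) (Or.inl (by simpa using hu))
  simpa using h.comp_ofReal

/-- The `n`-th term of the series for `ζ(s, x) - ζ(s, 1) - (1 - x)`. The last summand is `1 - x`
times a telescoping term, chosen so that `hterm x n s` is a second difference of `y ↦ y ^ (-s)`
and the series still converges to the left of `Re s = 1`. -/
noncomputable def hterm (x : ℝ) (n : ℕ) (s : ℂ) : ℂ :=
  ((n + x : ℝ) : ℂ) ^ (-s) - ((n + 1 : ℝ) : ℂ) ^ (-s) -
    (1 - x : ℝ) * (((n + 1 : ℝ) : ℂ) ^ (-s) - ((n + 1 + 1 : ℝ) : ℂ) ^ (-s))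

/-- A convex open set containing `0` and `2` on which the series of the `hterm x n` converges
uniformly; the ball keeps `‖s‖` bounded. -/
def hdom : Set ℂ := {s : ℂ | -(1 / 2) < s.re} ∩ Metric.ball 0 3

theorem norm_hterm_le {x : ℝ} (hx0 : 0 < x) (hx1 : x ≤ 1) (n : ℕ) {s : ℂ} (hs : s ∈ hdom) :
    ‖hterm x n s‖ ≤ 24 * x ^ (-5 : ℝ) * ((n : ℝ) + 1) ^ (-(3 / 2) : ℝ) := by
  obtain ⟨hre, hn⟩ := hs
  have hn : ‖s‖ < 3 := by simpa using hn
  have hre : -(1 / 2) < s.re := hre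
  have hre3 : s.re < 3 := (Complex.re_le_norm s).trans_lt hn
  have hn0 : (0 : ℝ) ≤ n := Nat.cast_nonneg n
  have key := norm_second_diff_le (p := n + x) (q := n + 1)
    (f := fun y : ℝ => (y : ℂ) ^ (-s)) (f' := fun y : ℝ => -s * (y : ℂ) ^ (-s - 1))
    (f'' := fun y : ℝ => -s * ((-s - 1) * (y : ℂ) ^ (-s - 1 - 1)))
    (C := 12 * x ^ (-5 : ℝ) * ((n : ℝ) + 1) ^ (-(3 / 2) : ℝ)) (by linarith) (by linarith)
    (fun u hu => hasDerivAt_ofReal_cpow_of_pos _ (by linarith [hu.1]))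
    (fun u hu => (hasDerivAt_ofReal_cpow_of_pos _ (by linarith [hu.1])).const_mul _) ?_
  · have : ((n + 1 : ℝ) - (n + x)) = 1 - x := by ring
    simp only [this] at key
    unfold hterm
    refine key.trans (le_of_eq (by ring))
  · intro u hu
    have hu0 : 0 < u := by linarith [hu.1]
    have hux : x * (n + 1) ≤ u := by nlinarith [hu.1]
    rw [norm_mul, norm_mul, norm_neg, Complex.norm_cpow_eq_rpow_re_of_pos hu0, ← mul_assoc,
      mul_assoc (12 : ℝ)]
    have e1 : ‖s‖ * ‖-s - 1‖ ≤ 12 := by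
      have : ‖-s - 1‖ ≤ 4 := by
        refine (norm_sub_le _ _).trans ?_
        rw [norm_neg, norm_one]; linarith
      nlinarith [norm_nonneg s]
    have e2 : u ^ (-s - 1 - 1).re ≤ x ^ (-5 : ℝ) * ((n : ℝ) + 1) ^ (-(3 / 2) : ℝ) := by
      have : (-s - 1 - 1).re = -s.re - 2 := by simp; ring
      rw [this]
      calc u ^ (-s.re - 2) ≤ (x * (n + 1)) ^ (-s.re - 2) :=
            Real.rpow_le_rpow_of_nonpos (by positivity) hux (by linarith)
        _ = x ^ (-s.re - 2) * ((n : ℝ) + 1) ^ (-s.re - 2) :=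
            Real.mul_rpow hx0.le (by positivity)
        _ ≤ _ := by
            gcongr ?_ * ?_
            · exact Real.rpow_le_rpow_of_exponent_ge hx0 hx1 (by linarith)
            · exact Real.rpow_le_rpow_of_exponent_le (by linarith) (by linarith)
    exact mul_le_mul e1 e2 (by positivity) (by norm_num)

theorem isOpen_hdom : IsOpen hdom :=
  (isOpen_lt continuous_const Complex.continuous_re).inter Metric.isOpen_ball

theorem isPreconnected_hdom : IsPreconnected hdom :=
  ((convex_halfSpace_re_gt _).inter (convex_ball _ _)).isPreconnected

/-- The value of the Hurwitz zeta function at `0`, up to a constant independent of `x`: classically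
`ζ(0, x) = 1 / 2 - x`. Only differences matter, because they get paired with characters of sum
zero. -/
theorem hurwitz_sub_zero {x : ℝ} (hx0 : 0 < x) (hx1 : x ≤ 1) :
    HurwitzZeta.hurwitzZeta x 0 - HurwitzZeta.hurwitzZeta (1 : ℝ) 0 = 1 - x := by
  have hsum : Summable fun n : ℕ => 24 * x ^ (-5 : ℝ) * ((n : ℝ) + 1) ^ (-(3 / 2) : ℝ) := by
    apply Summable.mul_left
    have := (summable_nat_add_iff 1).2
      (Real.summable_nat_rpow.2 (by norm_num : (-(3 / 2) : ℝ) < -1))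
    simpa using this
  have hne : ∀ (n : ℕ) (y : ℝ), 0 < y → ((n + y : ℝ) : ℂ) ≠ 0 := by
    intro n y hy
    have : (0 : ℝ) < n + y := by positivity
    exact_mod_cast this.ne'
  have hdiff : DifferentiableOn ℂ (fun s => ∑' n, hterm x n s) hdom := by
    refine Complex.differentiableOn_tsum_of_summable_norm hsum ?_ isOpen_hdom
      (fun n s hs => norm_hterm_le hx0 hx1 n hs)
    intro n
    have hc : ∀ y : ℝ, 0 < y → Differentiable ℂ (fun s : ℂ => ((y : ℝ) : ℂ) ^ (-s)) := by
      intro y hy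
      exact differentiable_neg.const_cpow (Or.inl (by exact_mod_cast hy.ne'))
    refine Differentiable.differentiableOn ?_
    exact ((hc _ (by positivity)).sub (hc _ (by positivity))).sub
      (((hc _ (by positivity)).sub (hc _ (by positivity))).const_mul _)
  have hG : Differentiable ℂ (fun s => HurwitzZeta.hurwitzZeta x s -
      HurwitzZeta.hurwitzZeta (1 : ℝ) s - (1 - x : ℝ)) :=
    (HurwitzZeta.differentiable_hurwitzZeta_sub_hurwitzZeta _ _).sub_const _
  -- identity theorem on `hdom`: both sides agree near `s = 2`, where the Dirichlet series of the
  -- Hurwitz zeta functions converge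
  have heq := AnalyticOnNhd.eqOn_of_preconnected_of_eventuallyEq (z₀ := 2) (U := hdom)
    (hG.differentiableOn.analyticOnNhd isOpen_hdom) (hdiff.analyticOnNhd isOpen_hdom)
    isPreconnected_hdom (by constructor <;> simp <;> norm_num) ?_
  · have h0 := heq (x := 0) (by constructor <;> simp)
    simp only at h0
    -- at `s = 0` every power equals `1`, so the series vanishes termwise
    have hz : ∀ n, hterm x n 0 = 0 := by intro n; simp [hterm]
    simp only [hz, tsum_zero] at h0
    rw [sub_eq_zero] at h0
    rw [h0]; push_cast; ring
  · have hop : IsOpen {s : ℂ | 1 < s.re} := isOpen_lt continuous_const Complex.continuous_re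
    filter_upwards [hop.mem_nhds (show (2 : ℂ) ∈ {s : ℂ | 1 < s.re} by simp)] with s hs
    have hs : 1 < s.re := hs
    have a1 := HurwitzZeta.hasSum_hurwitzZeta_of_one_lt_re (a := x) ⟨hx0.le, hx1⟩ hs
    have a2 := HurwitzZeta.hasSum_hurwitzZeta_of_one_lt_re (a := 1) ⟨zero_le_one, le_rfl⟩ hs
    have a3 := (hasSum_nat_add_iff' 1).2 a2
    have a4 := (a1.sub a2).sub ((a2.sub a3).mul_left ((1 - x : ℝ) : ℂ))
    have a5 := a4.tsum_eq
    have : ∀ n : ℕ, hterm x n s = 1 / ((n : ℂ) + x) ^ s - 1 / ((n : ℂ) + (1 : ℝ)) ^ s -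
        ((1 - x : ℝ) : ℂ) * (1 / ((n : ℂ) + (1 : ℝ)) ^ s -
          1 / (((n + 1 : ℕ) : ℂ) + (1 : ℝ)) ^ s) := by
      intro n
      simp only [hterm, Complex.cpow_neg, one_div]
      push_cast
      rfl
    simp only [this]
    rw [a5]
    simp

section

open DirichletCharacter

/-! ### Nonvanishing of character sums of the sawtooth function -/

/-- The sawtooth function `((x / m))` on residues modulo `m`: the fractional part of `x / m` minus
`1 / 2`, with the value `0` at `x = 0` that makes it odd. -/
noncomputable def saw (m : ℕ) (x : ZMod m) : ℂ :=
  if x = 0 then 0 else (x.val : ℂ) / m - 1 / 2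

/-- The classical formula `L(0, ψ) = -B_{1,ψ}`. -/
theorem LFunction_zero_eq {f : ℕ} [NeZero f] {ψ : DirichletCharacter ℂ f} (hψ : ψ ≠ 1) :
    DirichletCharacter.LFunction ψ 0 = -∑ j : ZMod f, ψ j * saw f j := by
  have hf : f ≠ 1 := fun h => hψ (level_one' ψ h)
  have hs : ∑ j : ZMod f, ψ j = 0 := MulChar.sum_eq_zero_of_ne_one hψ
  have hf0 : (0 : ℝ) < f := by exact_mod_cast NeZero.pos f
  have key : ∀ j : ZMod f, ψ j * HurwitzZeta.hurwitzZeta (ZMod.toAddCircle j) 0 =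
      ψ j * HurwitzZeta.hurwitzZeta (1 : ℝ) 0 + ψ j * (1 / 2) - ψ j * saw f j := by
    intro j
    by_cases hj : j = 0
    · subst hj; simp [ψ.map_zero' hf]
    · have hv : 0 < j.val := Nat.pos_of_ne_zero (by simpa [ZMod.val_eq_zero] using hj)
      have h := hurwitz_sub_zero (x := j.val / f) (by positivity)
        ((div_le_one hf0).2 (by exact_mod_cast j.val_lt.le))
      rw [sub_eq_iff_eq_add] at h
      rw [ZMod.toAddCircle_apply, h, saw, if_neg hj]
      push_cast
      ring
  rw [DirichletCharacter.LFunction, ZMod.LFunction, Finset.sum_congr rfl fun j _ => key j,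
    Finset.sum_sub_distrib, Finset.sum_add_distrib, ← Finset.sum_mul, ← Finset.sum_mul, hs]
  simp

/-- The generalized Bernoulli number `B_{1,ψ}` of a primitive odd character does not vanish: it is
`-L(0, ψ)`, which the functional equation ties to `L(1, ψ⁻¹) ≠ 0`. -/
theorem sum_saw_ne_zero {f : ℕ} [NeZero f] {ψ : DirichletCharacter ℂ f} (hp : ψ.IsPrimitive)
    (ho : ψ.Odd) : ∑ j : ZMod f, ψ j * saw f j ≠ 0 := by
  have hψ : ψ ≠ 1 := by
    rintro rfl
    have h : (1 : DirichletCharacter ℂ f) (-1) = -1 := ho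
    rw [MulChar.one_apply isUnit_one.neg] at h
    norm_num at h
  have hf : f ≠ 1 := fun h => hψ (level_one' ψ h)
  intro h0
  have hL : LFunction ψ 0 = 0 := by rw [LFunction_zero_eq hψ, h0, neg_zero]
  have hψi : ψ⁻¹ ≠ 1 := by simpa using hψ
  have hpi : ψ⁻¹.IsPrimitive := by
    rw [isPrimitive_def, conductor_inv]; exact hp
  rw [LFunction_eq_completed_div_gammaFactor _ _ (Or.inr hf), ho.gammaFactor_def,
    div_eq_zero_iff] at hL
  -- the gamma factor of an odd character is regular and nonzero at `s = 0`
  have hg : Complex.Gammaℝ (0 + 1) ≠ 0 := Complex.Gammaℝ_ne_zero_of_re_pos (by simp)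
  have hc := hL.resolve_right hg
  have h1 := hpi.completedLFunction_one_sub 0
  rw [inv_inv, hc, mul_zero, sub_zero] at h1
  refine LFunction_apply_one_ne_zero hψi ?_
  rw [LFunction_eq_completed_div_gammaFactor _ _ (Or.inr hf), h1, zero_div]

/-! ### Twisting and lifting character sums -/

open ZMod in
/-- For primitive `ψ`, dilating the argument of `φ` by *any* residue `a`, unit or not, multiplies the
`ψ`-twisted sum by `ψ⁻¹ a`; both sides are `0` when `a` is not a unit. It follows from Fourier
inversion of `φ` and the separability of the Gauss sum of a primitive character. -/
theorem sum_twist {f : ℕ} [NeZero f] {ψ : DirichletCharacter ℂ f} (hp : ψ.IsPrimitive)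
    (φ : ZMod f → ℂ) (a : ZMod f) :
    ∑ j, ψ j * φ (j * a) = ψ⁻¹ a * ∑ j, ψ j * φ j := by
  have hφ : ∀ x, φ x = (f : ℂ)⁻¹ * ∑ k, stdAddChar (k * x) * ZMod.dft φ k := by
    intro x
    have := congrFun (ZMod.dft.symm_apply_apply φ) x
    rw [ZMod.invDFT_apply] at this
    simpa using this.symm
  have key : ∀ b : ZMod f, ∑ j, ψ j * φ (j * b) =
      (f : ℂ)⁻¹ * ∑ k, (ψ⁻¹ (k * b) * gaussSum ψ stdAddChar) * ZMod.dft φ k := by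
    intro b
    simp_rw [← gaussSum_mulShift_of_isPrimitive _ hp, gaussSum, hφ (_ * b), Finset.mul_sum,
      Finset.sum_mul, Finset.mul_sum]
    rw [Finset.sum_comm]
    refine Finset.sum_congr rfl fun k _ => Finset.sum_congr rfl fun j _ => ?_
    rw [AddChar.mulShift_apply, show k * b * j = k * (j * b) by ring]
    ring
  have k1 := key 1
  simp only [mul_one] at k1
  rw [key a, k1]
  simp_rw [map_mul, Finset.mul_sum]
  refine Finset.sum_congr rfl fun k _ => ?_
  ring

theorem sum_zmod_eq_sum_range {m : ℕ} [NeZero m] (F : ZMod m → ℂ) :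
    ∑ x, F x = ∑ n ∈ Finset.range m, F n := by
  refine Finset.sum_bij' (fun x _ => x.val) (fun n _ => (n : ZMod m)) ?_ ?_ ?_ ?_ ?_
  · intro x _; exact Finset.mem_range.2 x.val_lt
  · simp
  · simp
  · intro n hn; exact ZMod.val_cast_of_lt (Finset.mem_range.1 hn)
  · simp

theorem sum_range_mul_eq {f g : ℕ} (F : ℕ → ℂ) :
    ∑ n ∈ Finset.range (f * g), F n =
      ∑ j ∈ Finset.range f, ∑ k ∈ Finset.range g, F (j + f * k) := by
  rw [Finset.sum_comm]
  induction g with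
  | zero => simp
  | succ g ih =>
    rw [Finset.sum_range_succ, ← ih, Nat.mul_succ, Finset.sum_range_add]
    congr 1
    exact Finset.sum_congr rfl fun j _ => by rw [add_comm]

/-- Pulling `ψ` back from modulus `f` to modulus `f * g` (as a function of `n mod f`, hence possibly
nonzero at non-units of `ZMod (f * g)`) leaves its sawtooth sum unchanged. This is the distribution
relation `∑ k < g, (((x + k) / g)) = ((x))` together with `ψ 0 = 0`. -/
theorem sum_lift_saw {f g : ℕ} [NeZero f] [NeZero g] {ψ : DirichletCharacter ℂ f} (hf : f ≠ 1) :
    ∑ n : ZMod (f * g), ψ (n.cast : ZMod f) * saw (f * g) n = ∑ j, ψ j * saw f j := by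
  rw [sum_zmod_eq_sum_range, sum_zmod_eq_sum_range, sum_range_mul_eq]
  refine Finset.sum_congr rfl fun j hj => ?_
  have hj := Finset.mem_range.1 hj
  have e : ∀ k : ℕ, ((((j + f * k : ℕ) : ZMod (f * g))).cast : ZMod f) = (j : ZMod f) := by
    intro k
    rw [ZMod.cast_natCast (Dvd.intro _ rfl)]
    simp
  simp_rw [e]
  rw [← Finset.mul_sum]
  -- the class `j = 0`, where the sawtooth has its exceptional value, is killed by `ψ 0 = 0`
  rcases Nat.eq_zero_or_pos j with rfl | hj0
  · simp [ψ.map_zero' hf]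
  congr 1
  have hs : ∀ (m n : ℕ), 0 < n → n < m → saw m (n : ZMod m) = (n : ℂ) / m - 1 / 2 := by
    intro m n h0 hlt
    have : (n : ZMod m) ≠ 0 := by
      rw [Ne, ZMod.natCast_eq_zero_iff]
      exact Nat.not_dvd_of_pos_of_lt h0 hlt
    rw [saw, if_neg this, ZMod.val_cast_of_lt hlt]
  have hf0 : (f : ℂ) ≠ 0 := NeZero.ne _
  have hg0 : (g : ℂ) ≠ 0 := NeZero.ne _
  have h2 : ∀ k ∈ Finset.range g, saw (f * g) ((j + f * k : ℕ) : ZMod (f * g)) =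
      ((j : ℂ) / (f * g) - 1 / 2) + (k : ℂ) / g := by
    intro k hk
    have hk := Finset.mem_range.1 hk
    rw [hs _ _ (by omega) (by nlinarith)]
    push_cast
    field_simp
    ring
  rw [Finset.sum_congr rfl h2, hs _ _ hj0 hj, Finset.sum_add_distrib, ← Finset.sum_div]
  have h3 : (∑ k ∈ Finset.range g, (k : ℂ)) = (g : ℂ) * (g - 1) / 2 := by
    have := Finset.sum_range_id_mul_two g
    have h4 : ((∑ k ∈ Finset.range g, k : ℕ) : ℂ) * 2 = g * (g - 1) := by
      rw [← Nat.cast_two, ← Nat.cast_mul, this]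
      push_cast [Nat.cast_sub (NeZero.pos g)]
      simp
    push_cast at h4
    rw [← h4]; ring
  rw [h3]
  simp
  field_simp
  ring

/-! ### Properties of the sawtooth function -/

theorem saw_intCast {m : ℕ} [NeZero m] (n : ℤ) :
    saw m (n : ZMod m) =
      if (m : ℤ) ∣ n then 0 else ((Int.fract ((n : ℚ) / m) : ℚ) : ℂ) - 1 / 2 := by
  unfold saw
  simp only [ZMod.intCast_zmod_eq_zero_iff_dvd]
  split_ifs with h
  · rfl
  · rw [Int.fract_div_intCast_eq_div_intCast_mod, ← ZMod.val_intCast]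
    push_cast
    rfl

theorem saw_neg {m : ℕ} [NeZero m] (x : ZMod m) : saw m (-x) = -saw m x := by
  unfold saw
  by_cases h : x = 0
  · simp [h]
  · have hm : (m : ℂ) ≠ 0 := NeZero.ne _
    rw [if_neg (by simpa using h), if_neg h, ZMod.neg_val, if_neg h, Nat.cast_sub x.val_lt.le]
    field_simp
    ring

/-- At multiples of `g` the sawtooth of modulus `f * g` factors through reduction modulo `f`. -/
theorem saw_mul {f g : ℕ} [NeZero f] [NeZero g] (x : ZMod (f * g)) (b : ℤ) :
    saw (f * g) (x * ((g : ℤ) * b : ℤ)) = saw f ((x.cast : ZMod f) * (b : ZMod f)) := by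
  obtain ⟨n, rfl⟩ := ZMod.intCast_surjective x
  have hg : (g : ℤ) ≠ 0 := NeZero.ne _
  have hgq : (g : ℚ) ≠ 0 := NeZero.ne _
  rw [ZMod.cast_intCast (Dvd.intro _ rfl), ← Int.cast_mul, ← Int.cast_mul, saw_intCast, saw_intCast]
  have h1 : ((f * g : ℕ) : ℤ) ∣ n * (g * b) ↔ (f : ℤ) ∣ n * b := by
    push_cast
    rw [show n * (g * b) = (n * b) * g by ring, mul_dvd_mul_iff_right hg]
  have h2 : ((n * (g * b) : ℤ) : ℚ) / (f * g : ℕ) = ((n * b : ℤ) : ℚ) / f := by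
    push_cast
    rw [show (n : ℚ) * (g * b) = (n * b) * g by ring, mul_div_mul_right _ _ hgq]
  rw [h2]
  simp only [h1]

/-! ### The relations satisfied by the six integers -/

/-- The arithmetic data of the theorem: `a 0`, `a 1`, `a 2` are prime to `r`, `a 3` and `e` have the
same gcd with `r`, and the fractional parts satisfy `∑ {j a i / r} = {j e / r} + j / r + 1`. -/
structure Hyp (r : ℕ) (a : Fin 4 → ℤ) (e : ℤ) : Prop where
  hg4 : Int.gcd (a 3) (r : ℤ) = Int.gcd e (r : ℤ)
  hg1 : IsCoprime (a 0) (r : ℤ)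
  hg2 : IsCoprime (a 1) (r : ℤ)
  hg3 : IsCoprime (a 2) (r : ℤ)
  hsum : ∀ j : ℕ, 1 ≤ j → j ≤ r - 1 →
      ∑ i : Fin 4, Int.fract ((j : ℚ) * (a i : ℚ) / (r : ℚ)) =
        Int.fract ((j : ℚ) * (e : ℚ) / (r : ℚ)) + (j : ℚ) / (r : ℚ) + 1

/-- The hypothesis in symmetric form: the sawtooth values at the multiples of the six integers cancel,
modulo every divisor `m` of `r`. The gcd conditions ensure that the exceptional values at `0` occur
either for both of `a 3` and `-e` or for neither, and for the other four only at `x = 0`. Multiples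
`j * (r / m)` of the hypothesis give the case of a proper divisor. -/
theorem Hyp.saw_rel {r : ℕ} {a : Fin 4 → ℤ} {e : ℤ} (H : Hyp r a e) (hr : 0 < r) {m : ℕ}
    [NeZero m] (hm : m ∣ r) (x : ZMod m) :
    ∑ i : Fin 6, saw m (x * (sixVec a e i : ℤ)) = 0 := by
  obtain ⟨d, rfl⟩ := hm
  have hd : 0 < d := Nat.pos_of_mul_pos_left hr
  have hm0 : 0 < m := NeZero.pos m
  have hdvd : (m : ℤ) ∣ ((m * d : ℕ) : ℤ) := by push_cast; exact Dvd.intro _ rfl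
  by_cases hx : x = 0
  · subst hx; simp [saw]
  set j := x.val with hj
  have hxj : x = ((j : ℤ) : ZMod m) := by simp [hj]
  have hj0 : 0 < j := Nat.pos_of_ne_zero (by simpa [hj, ZMod.val_eq_zero] using hx)
  have hjm : j < m := x.val_lt
  have hnd : ¬ (m : ℤ) ∣ j := by
    rw [Int.natCast_dvd_natCast]; exact Nat.not_dvd_of_pos_of_lt hj0 hjm
  have key := H.hsum (j * d) (Nat.mul_pos hj0 hd)
    (Nat.le_sub_one_of_lt (Nat.mul_lt_mul_of_pos_right hjm hd))
  have hdq : (d : ℚ) ≠ 0 := by exact_mod_cast hd.ne'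
  have hmq : (m : ℚ) ≠ 0 := NeZero.ne _
  have e1 : ∀ z : ℤ, ((j * d : ℕ) : ℚ) * (z : ℚ) / ((m * d : ℕ) : ℚ) = ((j * z : ℤ) : ℚ) / m := by
    intro z; push_cast; field_simp
  have e2 : ((j * d : ℕ) : ℚ) / ((m * d : ℕ) : ℚ) = (j : ℚ) / m := by
    push_cast; field_simp
  have e3 : Int.fract ((j : ℚ) / m) = j / m := by
    rw [Int.fract_div_natCast_eq_div_natCast_mod, Nat.mod_eq_of_lt hjm]
  have e4 : Int.fract (((j * 1 : ℤ) : ℚ) / m) = j / m := by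
    rw [← e3]; simp
  rw [e2] at key
  simp only [e1, Fin.sum_univ_four] at key
  have hcop : ∀ z : ℤ, IsCoprime z ((m * d : ℕ) : ℤ) → ¬ (m : ℤ) ∣ j * z := fun z hz h =>
    hnd ((hz.of_isCoprime_of_dvd_right hdvd).symm.dvd_of_dvd_mul_right h)
  have hgm : Int.gcd (a 3) m = Int.gcd e m := by
    have h1 : ∀ z : ℤ, Int.gcd z m = Nat.gcd (Int.gcd z ((m * d : ℕ) : ℤ)) m := by
      intro z
      rw [Int.gcd_def, Int.gcd_def, Int.natAbs_natCast, Int.natAbs_natCast, Nat.gcd_assoc,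
        Nat.gcd_eq_right (Dvd.intro _ rfl)]
    rw [h1, h1, H.hg4]
  have h3e : (m : ℤ) ∣ j * a 3 ↔ (m : ℤ) ∣ j * e := by
    have h1 : ∀ z : ℤ, (m : ℤ) ∣ j * z ↔ m ∣ j * Int.gcd z m := by
      intro z
      rw [Int.gcd_def, Int.natAbs_natCast, Nat.gcd_comm, Nat.dvd_mul_gcd_iff_dvd_mul, Int.natCast_dvd, Int.natAbs_mul,
        Int.natAbs_natCast]
    rw [h1, h1, hgm]
  have keyC := congrArg (fun q : ℚ => (q : ℂ)) key
  simp only [Fin.sum_univ_six, sixVec, hxj, ← Int.cast_mul]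
  simp only [Matrix.cons_val, mul_neg]
  simp only [Int.cast_neg, saw_neg]
  simp only [saw_intCast, if_neg (hcop _ H.hg1), if_neg (hcop _ H.hg2), if_neg (hcop _ H.hg3),
    if_neg (hcop 1 isCoprime_one_left), h3e, e4]
  by_cases h : (m : ℤ) ∣ j * e
  · have z1 : ∀ z : ℤ, (m : ℤ) ∣ z → Int.fract ((z : ℚ) / m) = 0 := by
      rintro _ ⟨c, rfl⟩
      push_cast
      rw [mul_div_cancel_left₀ _ hmq, Int.fract_intCast]
    rw [z1 _ h, z1 _ (h3e.2 h)] at keyC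
    simp only [if_pos h]
    push_cast at keyC ⊢
    linear_combination keyC
  · simp only [if_neg h]
    push_cast at keyC ⊢
    linear_combination keyC

/-- Every odd character modulo `r` sums to zero over the integers that are prime to `r` among the six:
all of them if `e` is prime to `r`, otherwise `a 0`, `a 1`, `a 2` and `-1`. In the second case `a 3`
and `-e` share the factor `g = gcd(e, r)`, and testing `Hyp.saw_rel` both modulo the conductor `f`
and modulo `f * g` separates their contribution from that of the other four. -/
theorem Hyp.char_rel {r : ℕ} {a : Fin 4 → ℤ} {e : ℤ} (H : Hyp r a e) (hr : 0 < r)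
    {χ : DirichletCharacter ℂ r} (hχ : χ.Odd) :
    (IsCoprime e (r : ℤ) → ∑ i : Fin 6, χ (sixVec a e i : ℤ) = 0) ∧
    (1 < Int.gcd e r → χ (a 0 : ℤ) + χ (a 1 : ℤ) + χ (a 2 : ℤ) + χ (-1 : ℤ) = 0) := by
  have : NeZero r := ⟨hr.ne'⟩
  set f := χ.conductor with hfdef
  have : NeZero f := ⟨χ.conductor_ne_zero⟩
  have hfr : f ∣ r := χ.conductor_dvd_level
  have hfr' : (f : ℤ) ∣ (r : ℤ) := Int.natCast_dvd_natCast.2 hfr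
  set P : DirichletCharacter ℂ f := χ.primitiveCharacter with hP
  have hPχ : ∀ z : ℤ, IsCoprime z (r : ℤ) → P z = χ z := fun z hz =>
    χ.primitiveCharacter_apply_of_isCoprime hz
  have hcm1 : ∀ z : ℤ, IsCoprime (-1) z := fun z => isCoprime_one_left.neg_left
  have hPodd : P.Odd := by
    have := hPχ (-1) (hcm1 _)
    push_cast at this
    rw [DirichletCharacter.Odd, this]; exact hχ
  have hf1 : f ≠ 1 := by
    intro h
    have h1 : P = 1 := level_one' P h
    have h2 : P (-1) = -1 := hPodd
    rw [h1, MulChar.one_apply isUnit_one.neg] at h2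
    norm_num at h2
  have hpi : P⁻¹.IsPrimitive := by
    rw [isPrimitive_def, conductor_inv]; exact χ.primitiveCharacter_isPrimitive
  have hoi : P⁻¹.Odd := by
    have h2 : P (-1) = -1 := hPodd
    rw [DirichletCharacter.Odd, MulChar.inv_apply_eq_inv, h2]
    simp
  set B := ∑ j : ZMod f, P⁻¹ j * saw f j with hB
  have hB0 : B ≠ 0 := sum_saw_ne_zero hpi hoi
  have htw : ∀ z : ZMod f, ∑ j, P⁻¹ j * saw f (j * z) = P z * B := by
    intro z
    rw [sum_twist hpi, inv_inv]
  -- the relation modulo the conductor, tested against `P⁻¹`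
  have rel1 : ∑ i : Fin 6, P (sixVec a e i : ℤ) = 0 := by
    have : ∑ j : ZMod f, P⁻¹ j * ∑ i : Fin 6, saw f (j * (sixVec a e i : ℤ)) = 0 := by
      simp [H.saw_rel hr hfr]
    simp_rw [Finset.mul_sum] at this
    rw [Finset.sum_comm] at this
    simp_rw [htw] at this
    rw [← Finset.sum_mul] at this
    exact (mul_eq_zero.1 this).resolve_right hB0
  refine ⟨fun he => ?_, fun hg => ?_⟩
  · have hall : ∀ i, IsCoprime (sixVec a e i) (r : ℤ) := by
      have h4 : IsCoprime (a 3) (r : ℤ) := by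
        rw [Int.isCoprime_iff_gcd_eq_one, H.hg4, ← Int.isCoprime_iff_gcd_eq_one]; exact he
      intro i
      fin_cases i
      exacts [H.hg1, H.hg2, H.hg3, h4, he.neg_left, hcm1 _]
    rw [← rel1]
    exact Finset.sum_congr rfl fun i _ => (hPχ _ (hall i)).symm
  · rw [← hPχ _ H.hg1, ← hPχ _ H.hg2, ← hPχ _ H.hg3, ← hPχ _ (hcm1 _)]
    simp only [Fin.sum_univ_six, sixVec, Matrix.cons_val] at rel1
    set g := Int.gcd e r with hgdef
    have : NeZero g := ⟨by omega⟩
    have hge : (g : ℤ) ∣ e := Int.gcd_dvd_left ..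
    have hg3 : (g : ℤ) ∣ a 3 := by
      rw [hgdef, ← H.hg4]; exact Int.gcd_dvd_left ..
    have hgr : (g : ℤ) ∣ r := Int.gcd_dvd_right ..
    by_cases hgf : IsCoprime (g : ℤ) (f : ℤ)
    · have hfg : f * g ∣ r := by
        have := hgf.symm.mul_dvd hfr' hgr
        exact_mod_cast this
      have hfg' : ((f * g : ℕ) : ℤ) ∣ (r : ℤ) := Int.natCast_dvd_natCast.2 hfg
      obtain ⟨b3, hb3⟩ := hg3
      obtain ⟨b5, hb5⟩ := hge
      have hb5' : -e = g * (-b5) := by rw [hb5]; ring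
      -- modulo `f * g`, a multiplier prime to `r` still acts by the scalar `P z`, whereas a multiple
      -- `g * b` contributes `g * P b`, since `n ↦ n mod f` has fibres of size `g`
      have tunit : ∀ z : ℤ, IsCoprime z (r : ℤ) →
          ∑ n : ZMod (f * g), P⁻¹ (n.cast : ZMod f) * saw (f * g) (n * (z : ZMod (f * g))) =
            P z * B := by
        intro z hz
        have hz1 := hz.of_isCoprime_of_dvd_right hfg'
        have hz2 := hz.of_isCoprime_of_dvd_right hfr'
        have hPz : P z ≠ 0 := (P.apply_ne_zero_iff z).2 hz2
        have h1 := sum_lift_saw (f := f) (g := g) (ψ := P⁻¹) hf1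
        rw [← hB, ← Equiv.sum_comp (Units.mulRight (ZMod.unitOfIsCoprime z hz1))] at h1
        simp only [Units.mulRight_apply, ZMod.coe_unitOfIsCoprime] at h1
        rw [← h1, Finset.mul_sum]
        refine Finset.sum_congr rfl fun n _ => ?_
        rw [ZMod.cast_mul (Dvd.intro _ rfl), ZMod.cast_intCast (Dvd.intro _ rfl), map_mul,
          MulChar.inv_apply_eq_inv' P (z : ZMod f)]
        field_simp
      have tg : ∀ b : ℤ,
          ∑ n : ZMod (f * g), P⁻¹ (n.cast : ZMod f) *
            saw (f * g) (n * ((g : ℤ) * b : ℤ)) = g * (P b * B) := by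
        intro b
        simp_rw [saw_mul]
        rw [← htw, sum_zmod_eq_sum_range, sum_zmod_eq_sum_range, sum_range_mul_eq, Finset.mul_sum]
        refine Finset.sum_congr rfl fun j _ => ?_
        have e : ∀ k : ℕ, ((((j + f * k : ℕ) : ZMod (f * g))).cast : ZMod f) = (j : ZMod f) := by
          intro k
          rw [ZMod.cast_natCast (Dvd.intro _ rfl)]
          simp
        simp_rw [e]
        simp
      have rel2 : P (a 0 : ℤ) + P (a 1 : ℤ) + P (a 2 : ℤ) + g * P b3 + g * P (-b5 : ℤ)
          + P (-1 : ℤ) = 0 := by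
        have : ∑ n : ZMod (f * g), P⁻¹ (n.cast : ZMod f) *
            ∑ i : Fin 6, saw (f * g) (n * (sixVec a e i : ℤ)) = 0 := by
          simp [H.saw_rel hr hfg]
        simp only [Fin.sum_univ_six, sixVec, Matrix.cons_val, mul_add, Finset.sum_add_distrib]
          at this
        rw [tunit _ H.hg1, tunit _ H.hg2, tunit _ H.hg3, tunit _ (hcm1 _), hb3, hb5', tg, tg]
          at this
        refine (mul_eq_zero.1 ?_).resolve_right hB0
        linear_combination this
      have m3 : P (a 3 : ℤ) = P (g : ℤ) * P b3 := by rw [hb3, Int.cast_mul, map_mul]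
      have m5 : P (-e : ℤ) = P (g : ℤ) * P (-b5 : ℤ) := by rw [hb5', Int.cast_mul, map_mul]
      rw [m3, m5] at rel1
      -- in `rel1` the pair `a 3`, `-e` carries the factor `P g`, of absolute value at most `1`, and in
      -- `rel2` the factor `g > 1`
      have hne : P (g : ℤ) - g ≠ 0 := by
        intro h
        have h1 : ‖P (g : ℤ)‖ ≤ 1 := P.norm_le_one _
        rw [sub_eq_zero.1 h, Complex.norm_natCast] at h1
        have : g ≤ 1 := by exact_mod_cast h1
        omega
      have hX : P b3 + P (-b5 : ℤ) = 0 := by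
        refine (mul_eq_zero.1 ?_).resolve_left hne
        linear_combination rel1 - rel2
      linear_combination rel2 - g * hX
    -- if `g` is not prime to `f`, then `P` vanishes at `a 3` and at `-e`
    · have hz : ∀ z : ℤ, (g : ℤ) ∣ z → P z = 0 := fun z hz =>
        (P.apply_eq_zero_iff z).2 fun h => hgf (h.of_isCoprime_of_dvd_left hz)
      rw [hz _ hg3, hz _ hge.neg_right] at rel1
      linear_combination rel1

/-! ### Pairing residues -/

/-- The multiset of values of `u` on `s` is invariant under negation. -/
def NegBalanced {ι G : Type*} [Neg G] [DecidableEq G] (u : ι → G) (s : Finset ι) : Prop :=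
  ∀ x : G, (s.filter (u · = x)).card = (s.filter (u · = -x)).card

/-- A family of units modulo `r` annihilated by all odd characters is symmetric under negation. Even
characters do not distinguish `x` from `-x`, so by orthogonality `x` and `-x` have equal
multiplicities. -/
theorem balanced_of_char {ι : Type*} [Fintype ι] {r : ℕ} [NeZero r] (u : ι → ZMod r)
    (hu : ∀ i, IsUnit (u i))
    (h : ∀ χ : DirichletCharacter ℂ r, χ.Odd → ∑ i, χ (u i) = 0) :
    NegBalanced u Finset.univ := by
  intro x
  by_cases hx : IsUnit x
  · have hinv : ∀ (χ : DirichletCharacter ℂ r) {y : ZMod r}, IsUnit y → χ y⁻¹ = (χ y)⁻¹ := by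
      intro χ y hy
      refine eq_inv_of_mul_eq_one_left ?_
      rw [← map_mul, ZMod.inv_mul_of_unit _ hy, map_one]
    have h0 : ∑ χ : DirichletCharacter ℂ r, (χ x⁻¹ - χ (-x)⁻¹) * ∑ i, χ (u i) = 0 := by
      refine Finset.sum_eq_zero fun χ _ => ?_
      rcases χ.even_or_odd with he | ho
      · rw [hinv χ hx, hinv χ hx.neg, he.eval_neg, sub_self, zero_mul]
      · rw [h χ ho, mul_zero]
    simp_rw [Finset.mul_sum, sub_mul] at h0
    rw [Finset.sum_comm] at h0
    simp_rw [Finset.sum_sub_distrib, sum_char_inv_mul_char_eq ℂ hx,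
      sum_char_inv_mul_char_eq ℂ hx.neg] at h0
    rw [← Finset.sum_filter, ← Finset.sum_filter, Finset.sum_const, Finset.sum_const,
      nsmul_eq_mul, nsmul_eq_mul, ← sub_mul] at h0
    have hφ : (r.totient : ℂ) ≠ 0 := by
      exact_mod_cast (Nat.totient_pos.2 (NeZero.pos r)).ne'
    have h1 := sub_eq_zero.1 ((mul_eq_zero.1 h0).resolve_right hφ)
    simp_rw [eq_comm (b := x), eq_comm (b := -x)]
    exact_mod_cast h1
  · rw [Finset.filter_false_of_mem, Finset.filter_false_of_mem]
    · rintro i - hi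
      exact hx (by simpa [hi] using hu i)
    · rintro i - hi
      exact hx (hi ▸ hu i)

/-- One step of the pairing: in a balanced family without self-opposite values, every index has a
partner with the opposite value, and removing both keeps the family balanced. -/
theorem NegBalanced.exists_pair {ι G : Type*} [InvolutiveNeg G] [DecidableEq G] [DecidableEq ι]
    {u : ι → G} {s : Finset ι} (hb : NegBalanced u s) (hne : ∀ i, u i ≠ -u i) {i : ι} (hi : i ∈ s) :
    ∃ j ∈ s.erase i, u j = -u i ∧ NegBalanced u ((s.erase i).erase j) := by
  have h1 : 0 < (s.filter (u · = -u i)).card := by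
    rw [← hb (u i), Finset.card_pos]
    exact ⟨i, by simp [hi]⟩
  obtain ⟨j, hj⟩ := Finset.card_pos.1 h1
  obtain ⟨hjs, hji⟩ := Finset.mem_filter.1 hj
  have hjm : j ∈ s.erase i :=
    Finset.mem_erase.2 ⟨fun h => hne i (by rw [h] at hji; exact hji), hjs⟩
  refine ⟨j, hjm, hji, fun x => ?_⟩
  have h2 := hb x
  simp only [Finset.card_filter] at h2 ⊢
  rw [← Finset.add_sum_erase _ _ hi, ← Finset.add_sum_erase _ _ hjm,
    ← Finset.add_sum_erase s _ hi, ← Finset.add_sum_erase (s.erase i) _ hjm] at h2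
  have h3 : (u j = x) ↔ (u i = -x) := by rw [hji, neg_eq_iff_eq_neg]
  have h4 : (u j = -x) ↔ (u i = x) := by rw [hji, neg_inj]
  simp only [h3, h4] at h2
  omega

theorem isUnit_ne_neg {r : ℕ} (hr : 2 < r) {x : ZMod r} (hx : IsUnit x) : x ≠ -x := by
  intro h
  have h1 : x * 2 = 0 := by
    rw [mul_two]; nth_rewrite 2 [h]; exact add_neg_cancel x
  have h2 : ((2 : ℕ) : ZMod r) = 0 := by
    rw [Nat.cast_ofNat]; exact (hx.mul_right_eq_zero).1 h1
  rw [ZMod.natCast_eq_zero_iff] at h2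
  exact absurd (Nat.le_of_dvd two_pos h2) (by omega)

theorem add_modEq_zero_of_le_two {r : ℕ} (hr0 : 0 < r) (hr : r ≤ 2) {x y : ℤ} (hx : IsCoprime x (r : ℤ))
    (hy : IsCoprime y (r : ℤ)) : Int.ModEq (r : ℤ) (x + y) 0 := by
  rw [Int.modEq_zero_iff_dvd]
  interval_cases r
  · simp
  · have h : ∀ z : ℤ, IsCoprime z ((2 : ℕ) : ℤ) → z % 2 = 1 := by
      intro z hz
      have : ¬ (2 : ℤ) ∣ z := fun hd => by
        have := hz.isUnit_of_dvd' hd (by norm_num)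
        rw [Int.isUnit_iff] at this; omega
      omega
    have := h x hx
    have := h y hy
    push_cast; omega

end

/-! ### The classification -/

theorem stmt4 (r : ℕ) (hr : 0 < r) (a : Fin 4 → ℤ) (e : ℤ)
    (hg4 : Int.gcd (a 3) (r : ℤ) = Int.gcd e (r : ℤ))
    (hg1 : Int.gcd (a 0) (r : ℤ) = 1) (hg2 : Int.gcd (a 1) (r : ℤ) = 1)
    (hg3 : Int.gcd (a 2) (r : ℤ) = 1)
    (hsum : ∀ j : ℕ, 1 ≤ j → j ≤ r - 1 →
      ∑ i : Fin 4, Int.fract ((j : ℚ) * (a i : ℚ) / (r : ℚ)) =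
        Int.fract ((j : ℚ) * (e : ℚ) / (r : ℚ)) + (j : ℚ) / (r : ℚ) + 1) :
    (1 < Int.gcd e (r : ℤ) →
      Int.ModEq (r : ℤ) (a 3) e ∧
      ∃ i₁ i₂ i₃ : Fin 4,
        ({i₁, i₂, i₃} : Finset (Fin 4)) = ({0, 1, 2} : Finset (Fin 4)) ∧
        Int.ModEq (r : ℤ) (a i₁) 1 ∧ Int.ModEq (r : ℤ) (a i₂ + a i₃) 0) ∧
    (Int.gcd e (r : ℤ) = 1 →
      ∃ σ : Equiv.Perm (Fin 6),
        Int.ModEq (r : ℤ) (sixVec a e (σ 0) + sixVec a e (σ 1)) 0 ∧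
        Int.ModEq (r : ℤ) (sixVec a e (σ 2) + sixVec a e (σ 3)) 0 ∧
        Int.ModEq (r : ℤ) (sixVec a e (σ 4) + sixVec a e (σ 5)) 0) := by
  have : NeZero r := ⟨hr.ne'⟩
  have H : Hyp r a e := ⟨hg4, Int.isCoprime_iff_gcd_eq_one.2 hg1,
    Int.isCoprime_iff_gcd_eq_one.2 hg2, Int.isCoprime_iff_gcd_eq_one.2 hg3, hsum⟩
  have hcm1 : IsCoprime (-1) (r : ℤ) := isCoprime_one_left.neg_left
  have hunit : ∀ z : ℤ, IsCoprime z (r : ℤ) → IsUnit (z : ZMod r) := fun z hz => by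
    rw [← ZMod.coe_unitOfIsCoprime z hz]; exact Units.isUnit _
  have hmod : ∀ x y : ℤ, ((x : ZMod r) = -(y : ZMod r)) → Int.ModEq (r : ℤ) (y + x) 0 := by
    intro x y h
    rw [← ZMod.intCast_eq_intCast_iff]
    push_cast
    rw [h, add_neg_cancel]
  refine ⟨fun hg => ?_, fun hg => ?_⟩
  · have hr2 : 2 ≤ r := by
      have : Int.gcd e r ≤ r := Nat.le_of_dvd hr (by
        have : ((Int.gcd e r : ℕ) : ℤ) ∣ r := Int.gcd_dvd_right ..
        exact_mod_cast this)
      omega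
    let v : Fin 4 → ℤ := ![a 0, a 1, a 2, -1]
    have hv : ∀ i, IsCoprime (v i) (r : ℤ) := by
      intro i; fin_cases i; exacts [H.hg1, H.hg2, H.hg3, hcm1]
    -- pairing up `a 0`, `a 1`, `a 2`, `-1`; the partner of `-1` is congruent to `1`
    have main : ∃ i₁ i₂ i₃ : Fin 4,
        ({i₁, i₂, i₃} : Finset (Fin 4)) = ({0, 1, 2} : Finset (Fin 4)) ∧
        Int.ModEq (r : ℤ) (-1 + a i₁) 0 ∧ Int.ModEq (r : ℤ) (a i₂ + a i₃) 0 := by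
      rcases le_or_gt r 2 with hle | hlt
      · exact ⟨0, 1, 2, rfl, add_modEq_zero_of_le_two hr hle hcm1 H.hg1,
          add_modEq_zero_of_le_two hr hle H.hg2 H.hg3⟩
      · have hb : NegBalanced (fun i => (v i : ZMod r)) Finset.univ :=
          balanced_of_char _ (fun i => hunit _ (hv i)) fun χ hχ => by
            rw [Fin.sum_univ_four]
            exact (H.char_rel hr hχ).2 hg
        have hne : ∀ i, (v i : ZMod r) ≠ -(v i : ZMod r) := fun i =>
          isUnit_ne_neg hlt (hunit _ (hv i))
        obtain ⟨j, hj, hj1, hb1⟩ := hb.exists_pair hne (Finset.mem_univ 3)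
        have hj3 : j ≠ 3 := (Finset.mem_erase.1 hj).1
        have hva : ∀ k : Fin 4, k ≠ 3 → v k = a k := by
          intro k hk; fin_cases k <;> first | rfl | exact absurd rfl hk
        have fin : ∀ k l : Fin 4, ({j, k, l} : Finset (Fin 4)) = {0, 1, 2} →
            k ≠ 3 → l ≠ 3 → (v l : ZMod r) = -(v k : ZMod r) → ∃ i₁ i₂ i₃ : Fin 4,
            ({i₁, i₂, i₃} : Finset (Fin 4)) = ({0, 1, 2} : Finset (Fin 4)) ∧
            Int.ModEq (r : ℤ) (-1 + a i₁) 0 ∧ Int.ModEq (r : ℤ) (a i₂ + a i₃) 0 := by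
          intro k l hs hk hl hkl
          refine ⟨j, k, l, hs, ?_, ?_⟩
          · have := hmod _ _ hj1
            rwa [hva j hj3] at this
          · have := hmod _ _ hkl
            rwa [hva k hk, hva l hl] at this
        obtain ⟨k, hk⟩ : ∃ k, k ∈ ((Finset.univ : Finset (Fin 4)).erase 3).erase j := by
          clear * - hj3; revert j; decide
        obtain ⟨l, hl, hl1, -⟩ := hb1.exists_pair hne hk
        have hs : ({j, k, l} : Finset (Fin 4)) = {0, 1, 2} ∧ k ≠ 3 ∧ l ≠ 3 := by
          clear * - hj hk hl; revert j k l; decide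
        exact fin k l hs.1 hs.2.1 hs.2.2 hl1
    obtain ⟨i₁, i₂, i₃, hs, h1, h2⟩ := main
    have h1' : Int.ModEq (r : ℤ) (a i₁) 1 := by
      have := h1.add_left 1
      simpa using this
    refine ⟨?_, i₁, i₂, i₃, hs, h1', h2⟩
    -- the relation for `j = 1`, multiplied by `r`, compares residues modulo `r`
    have hrq : (r : ℚ) ≠ 0 := NeZero.ne _
    have hr1 := hsum 1 le_rfl (by omega)
    have hfr : ∀ z : ℤ, Int.fract (((1 : ℕ) : ℚ) * (z : ℚ) / (r : ℚ)) = ((z % r : ℤ) : ℚ) / r := by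
      intro z
      rw [Nat.cast_one, one_mul, Int.fract_div_intCast_eq_div_intCast_mod]
    simp only [hfr, Fin.sum_univ_four] at hr1
    have hr2 : a 0 % r + a 1 % r + a 2 % r + a 3 % r = e % r + 1 + r := by
      field_simp at hr1
      push_cast at hr1
      exact_mod_cast hr1
    have hperm : a 0 % (r : ℤ) + a 1 % r + a 2 % r = a i₁ % r + a i₂ % r + a i₃ % r := by
      have hsm : ∀ F : Fin 4 → ℤ, ∑ k ∈ ({i₁, i₂, i₃} : Finset (Fin 4)), F k =
          F i₁ + F i₂ + F i₃ := by
        intro F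
        have hd : i₁ ≠ i₂ ∧ i₁ ≠ i₃ ∧ i₂ ≠ i₃ := by
          clear * - hs; revert i₁ i₂ i₃; decide
        rw [Finset.sum_insert (by simp [hd.1, hd.2.1]), Finset.sum_insert (by simp [hd.2.2]),
          Finset.sum_singleton, add_assoc]
      have hsm' : ∀ F : Fin 4 → ℤ, ∑ k ∈ ({0, 1, 2} : Finset (Fin 4)), F k =
          F 0 + F 1 + F 2 := by
        intro F
        rw [Finset.sum_insert (by decide), Finset.sum_insert (by decide),
          Finset.sum_singleton, add_assoc]
      rw [← hsm fun k => a k % r, hs, hsm']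
    have hone : a i₁ % (r : ℤ) = 1 := by
      rw [h1']; exact Int.emod_eq_of_lt (by norm_num) (by omega)
    -- this pair is prime to `r`, so its least residues sum to exactly `r`, and the relation for `j = 1`
    -- cancels to `a 3 % r = e % r`
    have hsumr : a i₂ % (r : ℤ) + a i₃ % r = r := by
      have hi2 : i₂ = 0 ∨ i₂ = 1 ∨ i₂ = 2 := by
        clear * - hs; revert i₁ i₂ i₃; decide
      have hc : IsCoprime (a i₂) (r : ℤ) := by
        rcases hi2 with h | h | h <;> rw [h]
        exacts [H.hg1, H.hg2, H.hg3]
      have hpos : a i₂ % (r : ℤ) ≠ 0 := by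
        intro h0
        have := hc.isUnit_of_dvd' (Int.dvd_of_emod_eq_zero h0) dvd_rfl
        rw [Int.isUnit_iff] at this
        omega
      have hr0 : (0 : ℤ) < r := by exact_mod_cast hr
      have b1 := Int.emod_nonneg (a i₂) hr0.ne'
      have b2 := Int.emod_lt_of_pos (a i₂) hr0
      have b3 := Int.emod_nonneg (a i₃) hr0.ne'
      have b4 := Int.emod_lt_of_pos (a i₃) hr0
      have hd : (r : ℤ) ∣ a i₂ % r + a i₃ % r := by
        rw [Int.dvd_iff_emod_eq_zero, ← Int.add_emod]
        exact h2
      obtain ⟨c, hc⟩ := hd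
      have c1 : 0 < c := by nlinarith [lt_of_le_of_ne b1 (Ne.symm hpos)]
      have c2 : c < 2 := by nlinarith
      have : c = 1 := by omega
      rw [hc, this, mul_one]
    change a 3 % (r : ℤ) = e % r
    omega
  · have he : IsCoprime e (r : ℤ) := Int.isCoprime_iff_gcd_eq_one.2 hg
    have h4 : IsCoprime (a 3) (r : ℤ) := Int.isCoprime_iff_gcd_eq_one.2 (hg4.trans hg)
    have hv : ∀ i, IsCoprime (sixVec a e i) (r : ℤ) := by
      intro i; fin_cases i; exacts [H.hg1, H.hg2, H.hg3, h4, he.neg_left, hcm1]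
    rcases le_or_gt r 2 with hle | hlt
    · exact ⟨1, add_modEq_zero_of_le_two hr hle (hv _) (hv _),
        add_modEq_zero_of_le_two hr hle (hv _) (hv _), add_modEq_zero_of_le_two hr hle (hv _) (hv _)⟩
    · have hb : NegBalanced (fun i => (sixVec a e i : ZMod r)) Finset.univ :=
        balanced_of_char _ (fun i => hunit _ (hv i)) fun χ hχ => (H.char_rel hr hχ).1 he
      have hne : ∀ i, (sixVec a e i : ZMod r) ≠ -(sixVec a e i : ZMod r) := fun i =>
        isUnit_ne_neg hlt (hunit _ (hv i))
      obtain ⟨i1, m1, p1, hb1⟩ := hb.exists_pair hne (Finset.mem_univ 0)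
      obtain ⟨i2, m2⟩ : (((Finset.univ : Finset (Fin 6)).erase 0).erase i1).Nonempty := by
        rw [← Finset.card_pos, Finset.card_erase_of_mem m1,
          Finset.card_erase_of_mem (Finset.mem_univ _)]
        simp
      obtain ⟨i3, m3, p3, hb3⟩ := hb1.exists_pair hne m2
      obtain ⟨i4, m4⟩ :
          (((((Finset.univ : Finset (Fin 6)).erase 0).erase i1).erase i2).erase i3).Nonempty := by
        rw [← Finset.card_pos, Finset.card_erase_of_mem m3, Finset.card_erase_of_mem m2,
          Finset.card_erase_of_mem m1, Finset.card_erase_of_mem (Finset.mem_univ _)]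
        simp
      obtain ⟨i5, m5, p5, -⟩ := hb3.exists_pair hne m4
      have hinj : Function.Injective ![0, i1, i2, i3, i4, i5] := by
        simp only [Finset.mem_erase, Finset.mem_univ, and_true] at m1 m2 m3 m4 m5
        rw [← List.nodup_ofFn]
        simp [List.ofFn_succ]
        grind
      refine ⟨Equiv.ofBijective _ (Finite.injective_iff_bijective.1 hinj), ?_, ?_, ?_⟩
      · exact hmod _ _ p1
      · exact hmod _ _ p3
      · exact hmod _ _ p5
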